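/- Let ε₁ > 0 and suppose that for each ε ∈ (0,ε₁] there are λ(ε) ∈ [0,∞) and a nonzero u_ε ∈ C²([0,1]) with φ₂u_ε'' + φ₁u_ε' = λ(ε)u_ε on [0,1], and suppose lim_{ε→0} λ(ε)·ε² = 0. Then there exist constants C > 0 and ε₀ ∈ (0,ε₁] such that for all 0 < ε ≤ ε₀, writing λ = λ(ε): |sin(√(6λ))·((21 − 12√3)λ − 6) + 2√(6λ)·(3 − 2√3)·cos(√(6λ))| ≤ C·ε·λ^(3/2). -/

import Mathlib

open Real Set Filter Topology MeasureTheory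

/-- The degenerate point `x₀ = (2 − √3)ε`. -/
noncomputable def x0 (ε : ℝ) : ℝ := (2 - Real.sqrt 3) * ε

/-- Leading coefficient `φ₂` of `D_ε` on the interval. -/
noncomputable def phi2 (ε x : ℝ) : ℝ :=
  if x ≤ ε then (1/12) * (1 - 4*(x/ε) + (x/ε)^2)
  else if x ≤ 1 - ε then -(1/6)
  else (1/12) * (1 - 4*((1-x)/ε) + ((1-x)/ε)^2)

/-- First-order coefficient `φ₁` of `D_ε` on the interval. -/
noncomputable def phi1 (ε x : ℝ) : ℝ :=
  if x ≤ ε then -6 * (1 - x/ε) * ((1 + x/ε)^3)⁻¹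
  else if x ≤ 1 - ε then 0
  else 6 * (1 - (1-x)/ε) * ((1 + (1-x)/ε)^3)⁻¹

/-- Integration-factor function `g` on `[0, ε]`. -/
noncomputable def gfun (ε x : ℝ) : ℝ :=
  Real.sign (x - x0 ε) * |x - x0 ε| ^ ((4 + 2*Real.sqrt 3) * ε) *
    |x - 4*ε + x0 ε| ^ ((4 - 2*Real.sqrt 3) * ε) *
    (x + ε) ^ (-(8*ε)) *
    Real.exp (12*ε^3/(ε+x)^2 + 12*ε^2/(ε+x))

/-- Sturm–Liouville principal coefficient `p`. -/
noncomputable def pfun (ε x : ℝ) : ℝ :=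
  if x ≤ ε then gfun ε x / (6 * gfun ε ε)
  else if x ≤ 1 - ε then 1/6
  else gfun ε (1-x) / (6 * gfun ε ε)

/-- Sturm–Liouville weight `w = -p/φ₂`. -/
noncomputable def wfun (ε x : ℝ) : ℝ := -pfun ε x / phi2 ε x

/-!
At the turning point `x₀`, where `φ₂` vanishes, the equation degenerates into the Robin condition
`u' = -κ λ u`, with `κ = 2√3 - 3`. In the layer `[0, ε]` the difference `z = u' + κ λ u(x₀)`
satisfies `φ₂ z' + φ₁ z = O(|x - x₀|)`, and the signs of `φ₁` and of the slope of `φ₂` damp `z` away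
from `x₀`, so that the Robin condition persists up to `x = ε` with an error `O(|x - x₀|)`. By
symmetry the same happens in the layer at `1`.

Between the layers the complex amplitude `W = m u + i u'`, `m = √(6λ)`, just rotates:
`exp(i m (1 - 2ε)) W(1 - ε) = W(ε)`. By the layer analysis `conj W(ε)` and `W(1 - ε)` are close to
real multiples of `V = m + i κ λ`, so the reality of `conj W(ε) W(ε)` makes the imaginary part of
`exp(i m) V²` small. That imaginary part is `-λ` times the characteristic function to be estimated.
As this function is at most `-m` for small `m`, eigenvalues other than `0` stay away from `0`, which
turns the resulting bound `O(ε m (1 + λ))` into `O(ε λ^(3/2))`.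
-/

theorem le_mul_sub_of_forall_pos_deriv_le {f f' : ℝ → ℝ} {a b K : ℝ} (hab : a ≤ b) (hK : 0 ≤ K)
    (hfa : f a ≤ 0) (hf : ContinuousOn f (Icc a b)) (hf' : ∀ x ∈ Ioo a b, HasDerivAt f (f' x) x)
    (hbound : ∀ x ∈ Ioo a b, 0 < f x → f' x ≤ K) : f b ≤ K * (b - a) := by
  -- The mean value theorem is applied on `[c, b]`, with `c` the last point where `f ≤ 0`.
  have hcompact : IsCompact (Icc a b ∩ f ⁻¹' Iic 0) := isCompact_Icc.of_isClosed_subset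
    (hf.preimage_isClosed_of_isClosed isClosed_Icc isClosed_Iic) inter_subset_left
  obtain ⟨c, ⟨hc, hfc : f c ≤ 0⟩, hlast⟩ :=
    hcompact.exists_isGreatest ⟨a, left_mem_Icc.2 hab, hfa⟩
  rcases hc.2.eq_or_lt with rfl | hcb
  · exact hfc.trans (mul_nonneg hK (sub_nonneg.2 hab))
  have hsub : Ioo c b ⊆ Ioo a b := Ioo_subset_Ioo_left hc.1
  obtain ⟨ξ, hξ, hslope⟩ := exists_hasDerivAt_eq_slope f f' hcb
    (hf.mono (Icc_subset_Icc_left hc.1)) fun x hx => hf' x (hsub hx)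
  have hpos : 0 < f ξ :=
    not_le.1 fun h => (hlast ⟨Ioo_subset_Icc_self (hsub hξ), h⟩).not_gt hξ.1
  calc f b ≤ f b - f c := by linarith
    _ = f' ξ * (b - c) := by rw [hslope, div_mul_cancel₀ _ (sub_pos.2 hcb).ne']
    _ ≤ K * (b - c) := mul_le_mul_of_nonneg_right (hbound ξ (hsub hξ) hpos) (sub_pos.2 hcb).le
    _ ≤ K * (b - a) := by gcongr; exact hc.1

theorem le_mul_abs_sub_of_forall_pos_sub_mul_deriv_le {s : Set ℝ} (hs : Convex ℝ s)
    {f f' : ℝ → ℝ} {y K : ℝ} (hK : 0 ≤ K) (hy : y ∈ s) (hfy : f y = 0)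
    (hf' : ∀ x ∈ s, HasDerivAt f (f' x) x)
    (hbound : ∀ x ∈ s, 0 < f x → (x - y) * f' x ≤ K * |x - y|) {x : ℝ} (hx : x ∈ s) :
    f x ≤ K * |x - y| := by
  let γ : ℝ → ℝ := fun t => y + t * (x - y)
  have hγ : ∀ t ∈ Icc (0 : ℝ) 1, γ t ∈ s := fun t ht => hs.add_smul_sub_mem hy hx ht
  have hderiv : ∀ t ∈ Icc (0 : ℝ) 1, HasDerivAt (f ∘ γ) (f' (γ t) * (x - y)) t := fun t ht =>
    (hf' _ (hγ t ht)).comp t (((hasDerivAt_mul_const (x - y)).const_add y))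
  have h := le_mul_sub_of_forall_pos_deriv_le (f := f ∘ γ) zero_le_one
    (mul_nonneg hK (abs_nonneg (x - y))) (by simp [γ, hfy])
    (fun t ht => (hderiv t ht).continuousAt.continuousWithinAt)
    (fun t ht => hderiv t (Ioo_subset_Icc_self ht)) fun t ht hpos => by
      have hb := hbound _ (hγ t (Ioo_subset_Icc_self ht)) hpos
      rw [show γ t - y = t * (x - y) by simp [γ], abs_mul, abs_of_pos ht.1] at hb
      exact le_of_mul_le_mul_left (by linarith) ht.1
  simpa [γ] using h

theorem abs_le_mul_abs_sub_of_damped {s : Set ℝ} (hs : Convex ℝ s) {f f' : ℝ → ℝ} {y K : ℝ}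
    (hK : 0 ≤ K) (hy : y ∈ s) (hfy : f y = 0) (hf' : ∀ x ∈ s, HasDerivAt f (f' x) x)
    (hdamp : ∀ x ∈ s, (x - y) * (f x * f' x) ≤ K * |x - y| * |f x|) {x : ℝ} (hx : x ∈ s) :
    |f x| ≤ K * |x - y| := by
  refine abs_le'.2 ⟨le_mul_abs_sub_of_forall_pos_sub_mul_deriv_le hs hK hy hfy hf' ?_ hx,
    le_mul_abs_sub_of_forall_pos_sub_mul_deriv_le (f := -f) (f' := -f') hs hK hy (by simp [hfy])
      (fun x hx => (hf' x hx).neg) ?_ hx⟩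
  · intro x hx hpos
    have h := hdamp x hx
    rw [abs_of_pos hpos] at h
    exact le_of_mul_le_mul_right (by linarith) hpos
  · intro x hx hpos
    have h := hdamp x hx
    rw [← abs_neg (f x), abs_of_pos (show 0 < -f x from hpos)] at h
    refine le_of_mul_le_mul_right (?_ : (x - y) * -f' x * -f x ≤ _) hpos
    linarith

/-- `u`, with first and second derivatives `u'` and `u''`, solves the eigenvalue equation
`φ₂ u'' + φ₁ u' = l u` on `s`. Derivatives at points of `s` are two-sided, also at its ends. -/
structure IsSolutionOn (φ₂ φ₁ : ℝ → ℝ) (l : ℝ) (s : Set ℝ) (u u' u'' : ℝ → ℝ) : Prop where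
  hasDerivAt : ∀ x ∈ s, HasDerivAt u (u' x) x
  hasDerivAt_deriv : ∀ x ∈ s, HasDerivAt u' (u'' x) x
  eq : ∀ x ∈ s, φ₂ x * u'' x + φ₁ x * u' x = l * u x

namespace IsSolutionOn

variable {φ₂ φ₁ u u' u'' : ℝ → ℝ} {l : ℝ} {s t : Set ℝ}

theorem mono (h : IsSolutionOn φ₂ φ₁ l s u u' u'') (hts : t ⊆ s) :
    IsSolutionOn φ₂ φ₁ l t u u' u'' :=
  ⟨fun x hx => h.hasDerivAt x (hts hx), fun x hx => h.hasDerivAt_deriv x (hts hx),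
    fun x hx => h.eq x (hts hx)⟩

theorem comp_const_sub (h : IsSolutionOn φ₂ φ₁ l s u u' u'') {c : ℝ}
    (hts : MapsTo (fun x => c - x) t s) (h₂ : ∀ x ∈ t, φ₂ (c - x) = φ₂ x)
    (h₁ : ∀ x ∈ t, φ₁ (c - x) = -φ₁ x) :
    IsSolutionOn φ₂ φ₁ l t (fun x => u (c - x)) (fun x => -u' (c - x)) fun x => u'' (c - x) where
  hasDerivAt x hx := (h.hasDerivAt _ (hts hx)).comp_const_sub c x
  hasDerivAt_deriv x hx := by
    simpa only [neg_neg] using ((h.hasDerivAt_deriv _ (hts hx)).comp_const_sub c x).fun_neg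
  eq x hx := by
    have := h.eq _ (hts hx)
    rw [h₂ x hx, h₁ x hx] at this
    linarith

theorem abs_sub_le (h : IsSolutionOn φ₂ φ₁ l s u u' u'') (hs : Convex ℝ s) {M : ℝ}
    (hM : ∀ x ∈ s, |u' x| ≤ M) {x y : ℝ} (hx : x ∈ s) (hy : y ∈ s) :
    |u x - u y| ≤ M * |x - y| :=
  hs.norm_image_sub_le_of_norm_hasDerivWithin_le
    (fun x hx => (h.hasDerivAt x hx).hasDerivWithinAt) hM hy hx

end IsSolutionOn

/-- `y ∈ s` is a turning point of the operator `φ₂ ∂² + φ₁ ∂`: on `s` the leading coefficient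
changes sign at `y`, with slope at most `-c`, while the drift `φ₁` is nonpositive and stays close to
`-1/k` near `y`. At such a point the eigenvalue equation degenerates into the Robin condition
`u' y = -k l u y`. -/
structure IsTurningPoint (φ₂ φ₁ : ℝ → ℝ) (s : Set ℝ) (y k c L : ℝ) : Prop where
  mem : y ∈ s
  slope_pos : 0 < c
  lipschitz_nonneg : 0 ≤ L
  exists_eq_mul_sub : ∀ x ∈ s, ∃ ψ ≥ c, φ₂ x = ψ * (y - x)
  drift_nonpos : ∀ x ∈ s, φ₁ x ≤ 0
  abs_one_add_le : ∀ x ∈ s, |1 + k * φ₁ x| ≤ L * |x - y|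

namespace IsTurningPoint

variable {φ₂ φ₁ u u' u'' : ℝ → ℝ} {s : Set ℝ} {y k c L l : ℝ}

theorem deriv_add_eq_zero (h : IsTurningPoint φ₂ φ₁ s y k c L)
    (hu : IsSolutionOn φ₂ φ₁ l s u u' u'') : u' y + k * l * u y = 0 := by
  obtain ⟨ψ, -, hψ⟩ := h.exists_eq_mul_sub y h.mem
  have hrobin : 1 + k * φ₁ y = 0 := by simpa using h.abs_one_add_le y h.mem
  linear_combination u' y * hrobin - k * hu.eq y h.mem + k * u'' y * hψ

theorem abs_source_le (h : IsTurningPoint φ₂ φ₁ s y k c L) (hl : 0 ≤ l)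
    {M x : ℝ} (hx : x ∈ s) (hM : |u x - u y| ≤ M * |x - y|) :
    |l * (u x - u y) + l * u y * (1 + k * φ₁ x)| ≤ l * (M + L * |u y|) * |x - y| :=
  calc _ ≤ |l * (u x - u y)| + |l * u y * (1 + k * φ₁ x)| := abs_add_le _ _
    _ = l * |u x - u y| + l * |u y| * |1 + k * φ₁ x| := by simp only [abs_mul, abs_of_nonneg hl]
    _ ≤ l * (M * |x - y|) + l * |u y| * (L * |x - y|) := by
        gcongr
        exact h.abs_one_add_le x hx
    _ = _ := by ring

theorem abs_deriv_add_le_of_abs_deriv_le (h : IsTurningPoint φ₂ φ₁ s y k c L) (hs : Convex ℝ s)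
    (hl : 0 ≤ l) (hu : IsSolutionOn φ₂ φ₁ l s u u' u'') {M : ℝ} (hM : ∀ x ∈ s, |u' x| ≤ M)
    {x : ℝ} (hx : x ∈ s) :
    |u' x + k * l * u y| ≤ l * (M + L * |u y|) / c * |x - y| := by
  have hc := h.slope_pos
  have hL := h.lipschitz_nonneg
  have hM0 : 0 ≤ M := (abs_nonneg _).trans (hM y h.mem)
  refine abs_le_mul_abs_sub_of_damped (f := fun x => u' x + k * l * u y) hs (by positivity) h.mem
    (h.deriv_add_eq_zero hu) (fun x hx => (hu.hasDerivAt_deriv x hx).add_const _)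
    (fun w hw => ?_) hx
  obtain ⟨ψ, hcψ, hψ⟩ := h.exists_eq_mul_sub w hw
  set z := u' w + k * l * u y
  set R := l * (u w - u y) + l * u y * (1 + k * φ₁ w)
  set Q := l * (M + L * |u y|) * |w - y| * |z|
  have hode : ψ * ((w - y) * (z * u'' w)) = φ₁ w * z ^ 2 - R * z := by
    linear_combination z * u'' w * hψ - z * hu.eq w hw
  have hRz : -(R * z) ≤ Q := by
    have hR := h.abs_source_le hl hw (hu.abs_sub_le hs hM hw h.mem)
    calc -(R * z) ≤ |R| * |z| := (neg_le_abs _).trans (abs_mul R z).le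
      _ ≤ Q := mul_le_mul_of_nonneg_right hR (abs_nonneg z)
  have hψP : ψ * ((w - y) * (z * u'' w)) ≤ Q := by
    have := mul_nonpos_of_nonpos_of_nonneg (h.drift_nonpos w hw) (sq_nonneg z)
    linarith
  have hQ : 0 ≤ Q := by positivity
  suffices (w - y) * (z * u'' w) ≤ Q / c from this.trans_eq (by ring)
  rcases le_total ((w - y) * (z * u'' w)) 0 with hP | hP
  · exact hP.trans (div_nonneg hQ hc.le)
  · rw [le_div_iff₀' hc]
    exact (mul_le_mul_of_nonneg_right hcψ hP).trans hψP

variable {α β : ℝ}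

theorem abs_sub_le_length (h : IsTurningPoint φ₂ φ₁ (Icc α β) y k c L) {x : ℝ}
    (hx : x ∈ Icc α β) : |x - y| ≤ β - α :=
  abs_sub_le_of_le_of_le hx.1 hx.2 h.mem.1 h.mem.2

theorem abs_deriv_le (h : IsTurningPoint φ₂ φ₁ (Icc α β) y k c L) (hl : 0 ≤ l)
    (hlc : l * (β - α) ≤ c / 2) (hu : IsSolutionOn φ₂ φ₁ l (Icc α β) u u' u'')
    {x : ℝ} (hx : x ∈ Icc α β) :
    |u' x| ≤ 2 * l * (L * (β - α) / c + |k|) * |u y| := by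
  have hc := h.slope_pos
  have hL := h.lipschitz_nonneg
  have hcont : ContinuousOn (fun x => |u' x|) (Icc α β) := fun x hx =>
    (hu.hasDerivAt_deriv x hx).continuousAt.abs.continuousWithinAt
  obtain ⟨xmax, hmem, hmax⟩ := isCompact_Icc.exists_isMaxOn ⟨y, h.mem⟩ hcont
  set M := |u' xmax|
  have hflux : |u' xmax + k * l * u y| ≤ l * (M + L * |u y|) / c * (β - α) :=
    (h.abs_deriv_add_le_of_abs_deriv_le (convex_Icc α β) hl hu (fun _ hx => hmax hx) hmem).trans <|
      mul_le_mul_of_nonneg_left (h.abs_sub_le_length hmem) (by positivity)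
  have htriangle : M ≤ |u' xmax + k * l * u y| + |k| * l * |u y| := by
    simpa [abs_mul, abs_of_nonneg hl] using abs_sub (u' xmax + k * l * u y) (k * l * u y)
  have habsorb : l * (β - α) / c * M ≤ 1 / 2 * M := by
    refine mul_le_mul_of_nonneg_right ?_ (abs_nonneg _)
    rw [div_le_iff₀ hc]
    linarith
  have hexpand : l * (M + L * |u y|) / c * (β - α) =
      l * (β - α) / c * M + l * (L * (β - α) / c) * |u y| := by ring
  have hx : |u' x| ≤ M := hmax hx
  linarith

end IsTurningPoint

section Coefficients

variable {ε x : ℝ}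

theorem phi2_eq_of_mem_Icc (hε : 0 < ε) (hx : x ∈ Icc ε (1 - ε)) : phi2 ε x = -(1 / 6) := by
  rcases hx.1.eq_or_lt with rfl | hlt
  · norm_num [phi2, hε.ne']
  · rw [phi2, if_neg hlt.not_ge, if_pos hx.2]

theorem phi1_eq_zero_of_mem_Icc (hε : 0 < ε) (hx : x ∈ Icc ε (1 - ε)) : phi1 ε x = 0 := by
  rcases hx.1.eq_or_lt with rfl | hlt
  · simp [phi1, hε.ne']
  · rw [phi1, if_neg hlt.not_ge, if_pos hx.2]

theorem phi2_one_sub (hε : 0 < ε) (hε' : 2 * ε ≤ 1) (hx : x ≤ ε) :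
    phi2 ε (1 - x) = phi2 ε x := by
  rcases hx.eq_or_lt with rfl | hlt
  · rw [phi2_eq_of_mem_Icc hε ⟨by linarith, le_rfl⟩, phi2_eq_of_mem_Icc hε ⟨le_rfl, by linarith⟩]
  · rw [phi2, phi2, if_neg (by linarith), if_neg (by linarith), if_pos hx, sub_sub_cancel]

theorem phi1_one_sub (hε : 0 < ε) (hε' : 2 * ε ≤ 1) (hx : x ≤ ε) :
    phi1 ε (1 - x) = -phi1 ε x := by
  rcases hx.eq_or_lt with rfl | hlt
  · rw [phi1_eq_zero_of_mem_Icc hε ⟨by linarith, le_rfl⟩,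
      phi1_eq_zero_of_mem_Icc hε ⟨le_rfl, by linarith⟩, neg_zero]
  · rw [phi1, phi1, if_neg (by linarith), if_neg (by linarith), if_pos hx, sub_sub_cancel]
    ring

/-- The constant `κ` of the Robin condition `u' = -κ λ u` at `x₀`, determined by
`1 + κ φ₁(x₀) = 0`. -/
noncomputable def robinConst : ℝ := 2 * √3 - 3

theorem robinConst_sq : robinConst ^ 2 = 21 - 12 * √3 := by
  have h3 : √3 ^ 2 = (3 : ℝ) := sq_sqrt (by norm_num)
  unfold robinConst
  linear_combination 4 * h3

theorem sqrt_three_mem_Ioo : √3 ∈ Ioo (1.7 : ℝ) 1.75 :=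
  ⟨lt_sqrt_of_sq_lt (by norm_num), (sqrt_lt' (by norm_num)).2 (by norm_num)⟩

theorem robinConst_mem_Ioo : robinConst ∈ Ioo (0.4 : ℝ) 0.5 := by
  obtain ⟨hlo, hhi⟩ := sqrt_three_mem_Ioo
  constructor <;> unfold robinConst <;> linarith

theorem x0_mem_Icc (hε : 0 < ε) : x0 ε ∈ Icc 0 ε := by
  obtain ⟨hlo, hhi⟩ := sqrt_three_mem_Ioo
  constructor <;> unfold x0 <;> nlinarith

theorem phi2_eq_mul_sub (hε : 0 < ε) (hx : x ≤ ε) :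
    phi2 ε x = (4 * ε - x0 ε - x) / (12 * ε ^ 2) * (x0 ε - x) := by
  have h3 : √3 ^ 2 = (3 : ℝ) := sq_sqrt (by norm_num)
  rw [phi2, if_pos hx, x0]
  field_simp
  linear_combination ε ^ 2 * h3

theorem abs_one_add_robinConst_mul_le {t : ℝ} (ht : t ∈ Icc (0 : ℝ) 1) :
    |1 + robinConst * (-6 * (1 - t) * ((1 + t) ^ 3)⁻¹)| ≤ 12 * |t - (2 - √3)| := by
  obtain ⟨hlo, hhi⟩ := sqrt_three_mem_Ioo
  obtain ⟨ht0, ht1⟩ := ht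
  have h3 : √3 ^ 2 = (3 : ℝ) := sq_sqrt (by norm_num)
  set q := (1 + t) ^ 2 + (1 + t) * (3 - √3) + (3 - √3) ^ 2 + 6 * robinConst with hq
  have hfactor : 1 + robinConst * (-6 * (1 - t) * ((1 + t) ^ 3)⁻¹) =
      q * (t - (2 - √3)) / (1 + t) ^ 3 := by
    rw [hq, robinConst]
    field_simp
    linear_combination (-√3 - 3) * h3
  have hqle : |q| ≤ 12 := by
    rw [abs_of_nonneg (by unfold q robinConst; nlinarith)]
    unfold q robinConst
    nlinarith
  rw [hfactor, abs_div, abs_mul, abs_of_pos (by positivity : 0 < (1 + t) ^ 3)]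
  exact (div_le_self (by positivity) (one_le_pow₀ (by linarith))).trans (by gcongr)

theorem isTurningPoint_x0 (hε : 0 < ε) :
    IsTurningPoint (phi2 ε) (phi1 ε) (Icc 0 ε) (x0 ε) robinConst (1 / (6 * ε)) (12 / ε) where
  mem := x0_mem_Icc hε
  slope_pos := by positivity
  lipschitz_nonneg := by positivity
  exists_eq_mul_sub x hx := by
    refine ⟨_, ?_, phi2_eq_mul_sub hε hx.2⟩
    have hx0 : x0 ε ≤ ε := (x0_mem_Icc hε).2
    calc (4 * ε - x0 ε - x) / (12 * ε ^ 2) ≥ (2 * ε) / (12 * ε ^ 2) := by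
          gcongr
          linarith [hx.2]
      _ = 1 / (6 * ε) := by field_simp; norm_num
  drift_nonpos x hx := by
    have hx1 : x / ε ≤ 1 := (div_le_one hε).2 hx.2
    have hx0 : 0 ≤ x / ε := div_nonneg hx.1 hε.le
    rw [phi1, if_pos hx.2, mul_assoc]
    exact mul_nonpos_of_nonpos_of_nonneg (by norm_num)
      (mul_nonneg (sub_nonneg.2 hx1) (by positivity))
  abs_one_add_le x hx := by
    have h := abs_one_add_robinConst_mul_le
      (t := x / ε) ⟨div_nonneg hx.1 hε.le, (div_le_one hε).2 hx.2⟩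
    have hscale : x / ε - (2 - √3) = (x - x0 ε) / ε := by rw [x0]; field_simp
    rw [phi1, if_pos hx.2]
    rwa [hscale, abs_div, abs_of_pos hε, mul_div_assoc', ← div_mul_eq_mul_div] at h

end Coefficients

section Amplitude

/-- The complex amplitude `m u + i u'`, which turns solutions of `u'' = -m² u` into rotations of
angular velocity `-m`. -/
noncomputable def amplitude (m : ℝ) (u u' : ℝ → ℝ) (x : ℝ) : ℂ :=
  m * u x + u' x * Complex.I

theorem amplitude_eq_zero_iff {m : ℝ} (hm : m ≠ 0) {u u' : ℝ → ℝ} {x : ℝ} :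
    amplitude m u u' x = 0 ↔ u x = 0 ∧ u' x = 0 := by
  simp [amplitude, Complex.ext_iff, hm]

theorem hasDerivAt_amplitude {m : ℝ} {s : Set ℝ} {u u' u'' : ℝ → ℝ}
    (h : IsSolutionOn 1 0 (-m ^ 2) s u u' u'') {x : ℝ} (hx : x ∈ s) :
    HasDerivAt (amplitude m u u') (-(m * Complex.I) * amplitude m u u' x) x := by
  have hode : (u'' x : ℂ) = -m ^ 2 * u x := by
    exact_mod_cast (by simpa using h.eq x hx : u'' x = -m ^ 2 * u x)
  refine (((h.hasDerivAt x hx).ofReal_comp.const_mul (m : ℂ)).fun_add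
    ((h.hasDerivAt_deriv x hx).ofReal_comp.mul_const Complex.I)).congr_deriv ?_
  rw [hode, amplitude]
  linear_combination m * u' x * Complex.I_mul_I

theorem exp_mul_amplitude_eq {m c d : ℝ} {u u' u'' : ℝ → ℝ}
    (h : IsSolutionOn 1 0 (-m ^ 2) (Icc c d) u u' u'') {x : ℝ} (hx : x ∈ Icc c d) :
    Complex.exp (↑(m * (x - c)) * Complex.I) * amplitude m u u' x = amplitude m u u' c := by
  have hphase (x : ℝ) :
      HasDerivAt (fun x : ℝ => (↑(m * (x - c)) * Complex.I : ℂ)) (m * Complex.I) x := by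
    simpa using ((((hasDerivAt_id x).sub_const c).const_mul m).ofReal_comp).mul_const Complex.I
  have hderiv : ∀ x ∈ Icc c d, HasDerivAt
      (fun x : ℝ => Complex.exp (↑(m * (x - c)) * Complex.I) * amplitude m u u' x) 0 x :=
    fun x hx => ((hphase x).cexp.mul (hasDerivAt_amplitude h hx)).congr_deriv (by ring)
  simpa using constant_of_has_deriv_right_zero
    (fun x hx => (hderiv x hx).continuousAt.continuousWithinAt)
    (fun x hx => (hderiv x (Ico_subset_Icc_self hx)).hasDerivWithinAt) x hx

end Amplitude

section Norm

theorem eq_zero_iff_of_norm_sub_smul_le {𝕜 E : Type*} [NormedField 𝕜] [NormedAddCommGroup E]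
    [NormedSpace 𝕜 E] {a : 𝕜} {z v : E} {η : ℝ} (h : ‖z - a • v‖ ≤ η * ‖a‖) (hη : η < ‖v‖) :
    z = 0 ↔ a = 0 := by
  constructor
  · rintro rfl
    rw [zero_sub, norm_neg, norm_smul, mul_comm] at h
    by_contra ha
    exact (le_of_mul_le_mul_right h (norm_pos_iff.2 ha)).not_gt hη
  · rintro rfl
    simpa using h

theorem norm_inv_smul_sub_le {𝕜 E : Type*} [NormedField 𝕜] [SeminormedAddCommGroup E]
    [NormedSpace 𝕜 E] {a : 𝕜} {z v : E} {η : ℝ} (h : ‖z - a • v‖ ≤ η * ‖a‖) (ha : a ≠ 0) :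
    ‖a⁻¹ • z - v‖ ≤ η := by
  have hfactor : a⁻¹ • z - v = a⁻¹ • (z - a • v) := by rw [smul_sub, inv_smul_smul₀ ha]
  rw [hfactor, norm_smul, norm_inv, inv_mul_le_iff₀ (norm_pos_iff.2 ha), mul_comm]
  exact h

theorem norm_mul_sq_sub_mul_mul_le {R : Type*} [SeminormedCommRing R] {e e' v z w : R} {η : ℝ}
    (he' : ‖e'‖ ≤ 1) (hz : ‖z - v‖ ≤ η) (hw : ‖w - v‖ ≤ η) :
    ‖e * v ^ 2 - e' * (z * w)‖ ≤ ‖e - e'‖ * ‖v‖ ^ 2 + η * (2 * ‖v‖ + η) := by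
  have hη : 0 ≤ η := (norm_nonneg _).trans hz
  have hw' : ‖w‖ ≤ ‖v‖ + η := (norm_le_norm_add_norm_sub' w v).trans (by gcongr)
  have hzw : ‖(z - v) * w + v * (w - v)‖ ≤ η * (2 * ‖v‖ + η) :=
    calc _ ≤ ‖z - v‖ * ‖w‖ + ‖v‖ * ‖w - v‖ :=
          (norm_add_le _ _).trans (add_le_add (norm_mul_le _ _) (norm_mul_le _ _))
      _ ≤ η * (‖v‖ + η) + ‖v‖ * η := by gcongr
      _ = _ := by ring
  calc _ = ‖(e - e') * v ^ 2 - e' * ((z - v) * w + v * (w - v))‖ := by congr 1; ring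
    _ ≤ ‖e - e'‖ * ‖v ^ 2‖ + ‖e'‖ * ‖(z - v) * w + v * (w - v)‖ :=
        (norm_sub_le _ _).trans (add_le_add (norm_mul_le _ _) (norm_mul_le _ _))
    _ ≤ ‖e - e'‖ * ‖v‖ ^ 2 + 1 * (η * (2 * ‖v‖ + η)) := by
        gcongr
        exact norm_pow_le' v two_pos
    _ = _ := by rw [one_mul]

theorem norm_exp_ofReal_mul_I_sub_le (x y : ℝ) :
    ‖Complex.exp (x * Complex.I) - Complex.exp (y * Complex.I)‖ ≤ |x - y| := by
  have hfactor : Complex.exp (x * Complex.I) - Complex.exp (y * Complex.I) =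
      Complex.exp (y * Complex.I) * (Complex.exp (Complex.I * (x - y : ℝ)) - 1) := by
    rw [mul_sub, ← Complex.exp_add, mul_one]
    congr 2
    push_cast
    ring
  rw [hfactor, norm_mul, Complex.norm_exp_ofReal_mul_I, one_mul]
  exact norm_exp_I_mul_ofReal_sub_one_le

end Norm

section Matching

open scoped ComplexConjugate

variable {ε l m : ℝ} {u u' u'' : ℝ → ℝ}

theorem IsSolutionOn.oscillator (hε : 0 < ε) (hml : m ^ 2 = 6 * l)
    (hu : IsSolutionOn (phi2 ε) (phi1 ε) l (Icc ε (1 - ε)) u u' u'') :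
    IsSolutionOn 1 0 (-m ^ 2) (Icc ε (1 - ε)) u u' u'' where
  hasDerivAt := hu.hasDerivAt
  hasDerivAt_deriv := hu.hasDerivAt_deriv
  eq x hx := by
    have h := hu.eq x hx
    rw [phi2_eq_of_mem_Icc hε hx, phi1_eq_zero_of_mem_Icc hε hx] at h
    rw [hml, Pi.one_apply, Pi.zero_apply]
    linarith

theorem IsSolutionOn.reflect (hε : 0 < ε) (hε' : 2 * ε ≤ 1)
    (hu : IsSolutionOn (phi2 ε) (phi1 ε) l (Icc 0 1) u u' u'') :
    IsSolutionOn (phi2 ε) (phi1 ε) l (Icc 0 ε)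
      (fun x => u (1 - x)) (fun x => -u' (1 - x)) fun x => u'' (1 - x) :=
  hu.comp_const_sub (fun x hx => ⟨by linarith [hx.2], by linarith [hx.1]⟩)
    (fun _ hx => phi2_one_sub hε hε' hx.2) fun _ hx => phi1_one_sub hε hε' hx.2

theorem abs_deriv_le_of_mem_Icc (hε : 0 < ε) (hε' : ε ≤ 1 / 1000) (hl : 0 ≤ l)
    (hlε : l * ε ^ 2 ≤ 1 / 6000) (hu : IsSolutionOn (phi2 ε) (phi1 ε) l (Icc 0 ε) u u' u'')
    {x : ℝ} (hx : x ∈ Icc 0 ε) : |u' x| ≤ 2 * l * |u (x0 ε)| := by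
  have hlc : l * (ε - 0) ≤ 1 / (6 * ε) / 2 := by
    rw [div_div, le_div_iff₀ (by positivity)]
    linarith
  have hconst : 12 / ε * (ε - 0) / (1 / (6 * ε)) + |robinConst| ≤ 1 := by
    obtain ⟨hlo, hhi⟩ := robinConst_mem_Ioo
    have hratio : 12 / ε * (ε - 0) / (1 / (6 * ε)) = 72 * ε := by field_simp; ring
    rw [hratio, abs_of_pos (by linarith)]
    linarith
  calc |u' x| ≤ _ := (isTurningPoint_x0 hε).abs_deriv_le hl hlc hu hx
    _ ≤ 2 * l * 1 * |u (x0 ε)| := by gcongr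
    _ = _ := by rw [mul_one]

theorem abs_sub_le_of_mem_Icc (hε : 0 < ε) (hε' : ε ≤ 1 / 1000) (hl : 0 ≤ l)
    (hlε : l * ε ^ 2 ≤ 1 / 6000) (hu : IsSolutionOn (phi2 ε) (phi1 ε) l (Icc 0 ε) u u' u'')
    {x : ℝ} (hx : x ∈ Icc 0 ε) : |u x - u (x0 ε)| ≤ 2 * l * |u (x0 ε)| * ε := by
  have hlen : |x - x0 ε| ≤ ε := by simpa using (isTurningPoint_x0 hε).abs_sub_le_length hx
  exact (hu.abs_sub_le (convex_Icc 0 ε)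
    (fun _ => abs_deriv_le_of_mem_Icc hε hε' hl hlε hu) hx (x0_mem_Icc hε)).trans (by gcongr)

theorem abs_deriv_add_le (hε : 0 < ε) (hε' : ε ≤ 1 / 1000) (hl : 0 ≤ l)
    (hlε : l * ε ^ 2 ≤ 1 / 6000) (hu : IsSolutionOn (phi2 ε) (phi1 ε) l (Icc 0 ε) u u' u'') :
    |u' ε + robinConst * l * u (x0 ε)| ≤ l * (12 * l * ε ^ 2 + 72 * ε) * |u (x0 ε)| := by
  have hlen : |ε - x0 ε| ≤ ε := by
    simpa using (isTurningPoint_x0 hε).abs_sub_le_length (right_mem_Icc.2 hε.le)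
  calc _ ≤ l * (2 * l * |u (x0 ε)| + 12 / ε * |u (x0 ε)|) / (1 / (6 * ε)) * |ε - x0 ε| :=
        (isTurningPoint_x0 hε).abs_deriv_add_le_of_abs_deriv_le (convex_Icc 0 ε) hl hu
          (fun _ => abs_deriv_le_of_mem_Icc hε hε' hl hlε hu) (right_mem_Icc.2 hε.le)
    _ ≤ l * (2 * l * |u (x0 ε)| + 12 / ε * |u (x0 ε)|) / (1 / (6 * ε)) * ε := by gcongr
    _ = _ := by field_simp; ring

/-- The parameters of the matching argument: the layer width `ε`, the eigenvalue `l` and the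
frequency `m = √(6 l)` of the oscillation between the layers, in the regime where both `ε` and
`l ε²` are small. The thresholds are convenient, not optimal. -/
structure IsAdmissible (ε l m : ℝ) : Prop where
  eps_pos : 0 < ε
  eps_le : ε ≤ 1 / 1000
  eigenvalue_pos : 0 < l
  mul_sq_le : l * ε ^ 2 ≤ 1 / 6000
  freq_pos : 0 < m
  freq_sq : m ^ 2 = 6 * l

theorem IsAdmissible.eps_mul_freq_le (h : IsAdmissible ε l m) : ε * m ≤ 1 / 30 := by
  refine le_of_sq_le_sq ?_ (by norm_num)
  calc (ε * m) ^ 2 = 6 * (l * ε ^ 2) := by rw [mul_pow, h.freq_sq]; ring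
    _ ≤ (1 / 30) ^ 2 := by linarith [h.mul_sq_le]

/-- The amplitude `m + i κ l` at the right end of a solution with `u = 1` and `u' = κ l`, that is,
satisfying the effective Robin condition exactly. -/
noncomputable def robinAmplitude (m l : ℝ) : ℂ := m + robinConst * l * Complex.I

theorem norm_conj_amplitude_sub_le (h : IsAdmissible ε l m)
    (hu : IsSolutionOn (phi2 ε) (phi1 ε) l (Icc 0 ε) u u' u'') :
    ‖conj (amplitude m u u' ε) - u (x0 ε) • robinAmplitude m l‖ ≤
      l * (3 * ε * (m + 24)) * ‖u (x0 ε)‖ := by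
  have hε := h.eps_pos
  have hl := h.eigenvalue_pos.le
  have hm := h.freq_pos
  have hval := abs_sub_le_of_mem_Icc hε h.eps_le hl h.mul_sq_le hu (right_mem_Icc.2 hε.le)
  have hder := abs_deriv_add_le hε h.eps_le hl h.mul_sq_le hu
  set a := u (x0 ε)
  have hsplit : conj (amplitude m u u' ε) - a • robinAmplitude m l =
      (m * (u ε - a) : ℝ) - (u' ε + robinConst * l * a : ℝ) * Complex.I := by
    simp only [amplitude, robinAmplitude, map_add, map_mul, Complex.conj_ofReal, Complex.conj_I,
      Complex.real_smul]
    push_cast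
    ring
  have herr : 2 * (ε * m) + 12 * l * ε ^ 2 + 72 * ε ≤ 3 * ε * (m + 24) := by
    have hsq : 12 * l * ε ^ 2 = 2 * (ε * m) * (ε * m) := by
      linear_combination -2 * ε ^ 2 * h.freq_sq
    have := mul_le_mul_of_nonneg_left h.eps_mul_freq_le (by positivity : 0 ≤ 2 * (ε * m))
    nlinarith
  rw [hsplit]
  calc _ ≤ m * |u ε - a| + |u' ε + robinConst * l * a| := by
        refine (norm_sub_le _ _).trans_eq ?_
        rw [norm_mul, Complex.norm_I, mul_one, Complex.norm_real, Complex.norm_real, norm_mul,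
          Real.norm_of_nonneg hm.le, Real.norm_eq_abs, Real.norm_eq_abs]
    _ ≤ m * (2 * l * |a| * ε) + l * (12 * l * ε ^ 2 + 72 * ε) * |a| := by gcongr
    _ = l * (2 * (ε * m) + 12 * l * ε ^ 2 + 72 * ε) * |a| := by ring
    _ ≤ l * (3 * ε * (m + 24)) * |a| := by gcongr

theorem norm_amplitude_one_sub_sub_le (h : IsAdmissible ε l m)
    (hu : IsSolutionOn (phi2 ε) (phi1 ε) l (Icc 0 1) u u' u'') :
    ‖amplitude m u u' (1 - ε) - u (1 - x0 ε) • robinAmplitude m l‖ ≤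
      l * (3 * ε * (m + 24)) * ‖u (1 - x0 ε)‖ := by
  have hconj : conj (amplitude m (fun x => u (1 - x)) (fun x => -u' (1 - x)) ε) =
      amplitude m u u' (1 - ε) := by
    simp [amplitude]
  rw [← hconj]
  exact norm_conj_amplitude_sub_le h (hu.reflect h.eps_pos (by linarith [h.eps_le]))

theorem IsAdmissible.error_lt (h : IsAdmissible ε l m) : 3 * ε * (m + 24) < robinConst := by
  linarith [h.eps_le, h.eps_mul_freq_le, robinConst_mem_Ioo.1]

theorem IsAdmissible.error_lt_norm_robinAmplitude (h : IsAdmissible ε l m) :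
    l * (3 * ε * (m + 24)) < ‖robinAmplitude m l‖ :=
  calc l * (3 * ε * (m + 24)) < l * robinConst :=
        mul_lt_mul_of_pos_left h.error_lt h.eigenvalue_pos
    _ = (robinAmplitude m l).im := by simp [robinAmplitude, mul_comm]
    _ ≤ ‖robinAmplitude m l‖ := (le_abs_self _).trans (Complex.abs_im_le_norm _)

theorem exp_mul_amplitude_one_sub (h : IsAdmissible ε l m)
    (hu : IsSolutionOn (phi2 ε) (phi1 ε) l (Icc 0 1) u u' u'') {x : ℝ}
    (hx : x ∈ Icc ε (1 - ε)) :
    Complex.exp (↑(m * (x - ε)) * Complex.I) * amplitude m u u' x = amplitude m u u' ε :=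
  exp_mul_amplitude_eq
    ((hu.mono (Icc_subset_Icc h.eps_pos.le (by linarith [h.eps_pos]))).oscillator h.eps_pos
      h.freq_sq) hx

theorem eq_zero_of_amplitude_eq_zero (h : IsAdmissible ε l m)
    (hu : IsSolutionOn (phi2 ε) (phi1 ε) l (Icc 0 1) u u' u'')
    (hleft : u (x0 ε) = 0) (hmid : amplitude m u u' ε = 0) (hright : u (1 - x0 ε) = 0) {x : ℝ}
    (hx : x ∈ Icc (0 : ℝ) 1) : u x = 0 := by
  have hε := h.eps_pos
  have hε' : 2 * ε ≤ 1 := by linarith [h.eps_le]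
  have hlayer {v v' v'' : ℝ → ℝ} (hv : IsSolutionOn (phi2 ε) (phi1 ε) l (Icc 0 ε) v v' v'')
      (hv0 : v (x0 ε) = 0) {y : ℝ} (hy : y ∈ Icc 0 ε) : v y = 0 := by
    simpa [hv0] using abs_sub_le_of_mem_Icc hε h.eps_le h.eigenvalue_pos.le h.mul_sq_le hv hy
  rcases le_total x ε with hxε | hxε
  · exact hlayer (hu.mono (Icc_subset_Icc_right (by linarith))) hleft ⟨hx.1, hxε⟩
  rcases le_total x (1 - ε) with hxε' | hxε'
  · have hrot := exp_mul_amplitude_one_sub h hu ⟨hxε, hxε'⟩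
    rw [hmid, mul_eq_zero, or_iff_right (Complex.exp_ne_zero _),
      amplitude_eq_zero_iff h.freq_pos.ne'] at hrot
    exact hrot.1
  · have hrefl := hlayer (hu.reflect hε hε') hright (y := 1 - x) ⟨by linarith [hx.2], by linarith⟩
    simpa using hrefl

theorem ne_zero_at_turning_points (h : IsAdmissible ε l m)
    (hu : IsSolutionOn (phi2 ε) (phi1 ε) l (Icc 0 1) u u' u'')
    (hne : ∃ x ∈ Icc (0 : ℝ) 1, u x ≠ 0) : u (x0 ε) ≠ 0 ∧ u (1 - x0 ε) ≠ 0 := by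
  have hleft : amplitude m u u' ε = 0 ↔ u (x0 ε) = 0 := by
    rw [← map_eq_zero conj]
    exact eq_zero_iff_of_norm_sub_smul_le (norm_conj_amplitude_sub_le h
      (hu.mono (Icc_subset_Icc_right (by linarith [h.eps_le])))) h.error_lt_norm_robinAmplitude
  have hright : amplitude m u u' (1 - ε) = 0 ↔ u (1 - x0 ε) = 0 :=
    eq_zero_iff_of_norm_sub_smul_le (norm_amplitude_one_sub_sub_le h hu)
      h.error_lt_norm_robinAmplitude
  have hrot : amplitude m u u' ε = 0 ↔ amplitude m u u' (1 - ε) = 0 := by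
    rw [← exp_mul_amplitude_one_sub h hu ⟨by linarith [h.eps_le], le_rfl⟩, mul_eq_zero,
      or_iff_right (Complex.exp_ne_zero _)]
  obtain ⟨x, hx, hux⟩ := hne
  have hmid : amplitude m u u' ε ≠ 0 := fun hmid => hux <|
    eq_zero_of_amplitude_eq_zero h hu (hleft.1 hmid) hmid (hright.1 (hrot.1 hmid)) hx
  exact ⟨mt hleft.2 hmid, mt hright.2 (mt hrot.2 hmid)⟩

theorem im_exp_mul_inv_smul_amplitudes_eq_zero (h : IsAdmissible ε l m)
    (hu : IsSolutionOn (phi2 ε) (phi1 ε) l (Icc 0 1) u u' u'') (a b : ℝ) :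
    (Complex.exp (↑(m * (1 - ε - ε)) * Complex.I) *
      (a⁻¹ • conj (amplitude m u u' ε) * b⁻¹ • amplitude m u u' (1 - ε))).im = 0 := by
  have hrot := exp_mul_amplitude_one_sub h hu (x := 1 - ε) ⟨by linarith [h.eps_le], le_rfl⟩
  set e := Complex.exp (↑(m * (1 - ε - ε)) * Complex.I)
  have hreal : e * (a⁻¹ • conj (amplitude m u u' ε) * b⁻¹ • amplitude m u u' (1 - ε)) =
      ↑(a⁻¹ * b⁻¹ * Complex.normSq (amplitude m u u' ε)) := by
    rw [Complex.ofReal_mul, Complex.normSq_eq_conj_mul_self, Complex.real_smul, Complex.real_smul]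
    push_cast
    linear_combination (a : ℂ)⁻¹ * (b : ℂ)⁻¹ * conj (amplitude m u u' ε) * hrot
  rw [hreal, Complex.ofReal_im]

end Matching

section Characteristic

variable {ε l m : ℝ} {u u' u'' : ℝ → ℝ}

/-- The characteristic function of the limit problem `-u'' = 6 l u` on `[0, 1]`, `m = √(6 l)`, with
effective Robin conditions `u' 0 = -κ l u 0` and `u' 1 = κ l u 1`: it vanishes when `l > 0` is an
eigenvalue. -/
noncomputable def robinCharacteristic (m l : ℝ) : ℝ :=
  sin m * (robinConst ^ 2 * l - 6) - 2 * robinConst * m * cos m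

theorem im_exp_mul_robinAmplitude_sq (hml : m ^ 2 = 6 * l) :
    (Complex.exp (m * Complex.I) * robinAmplitude m l ^ 2).im =
      -l * robinCharacteristic m l := by
  rw [Complex.mul_im, Complex.exp_ofReal_mul_I_re, Complex.exp_ofReal_mul_I_im]
  simp only [robinAmplitude, robinCharacteristic, pow_two, Complex.mul_re, Complex.mul_im,
    Complex.add_re, Complex.add_im, Complex.ofReal_re, Complex.ofReal_im, Complex.I_re,
    Complex.I_im]
  linear_combination sin m * hml

theorem norm_robinAmplitude_sq_le (hml : m ^ 2 = 6 * l) :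
    ‖robinAmplitude m l‖ ^ 2 ≤ l * (6 + l) := by
  have hsq : ‖robinAmplitude m l‖ ^ 2 = m ^ 2 + (robinConst * l) ^ 2 := by
    rw [← Complex.normSq_eq_norm_sq, robinAmplitude, ← Complex.ofReal_mul,
      Complex.normSq_add_mul_I]
  obtain ⟨hlo, hhi⟩ := robinConst_mem_Ioo
  have hκ : robinConst ^ 2 ≤ 1 := by nlinarith
  rw [hsq, hml, mul_pow]
  nlinarith [sq_nonneg l]

theorem norm_robinAmplitude_le (hm : 0 ≤ m) (hl : 0 ≤ l) : ‖robinAmplitude m l‖ ≤ m + l := by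
  obtain ⟨hlo, hhi⟩ := robinConst_mem_Ioo
  refine (Complex.norm_le_abs_re_add_abs_im _).trans ?_
  have hκ : |robinConst * l| ≤ l := by
    rw [abs_of_nonneg (by nlinarith)]
    nlinarith
  simpa [robinAmplitude, abs_of_nonneg hm] using hκ

theorem mul_abs_robinCharacteristic_le (h : IsAdmissible ε l m)
    (hu : IsSolutionOn (phi2 ε) (phi1 ε) l (Icc 0 1) u u' u'')
    (hne : ∃ x ∈ Icc (0 : ℝ) 1, u x ≠ 0) :
    l * |robinCharacteristic m l| ≤ 2 * (ε * m) * ‖robinAmplitude m l‖ ^ 2 +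
      l * (3 * ε * (m + 24)) * (2 * ‖robinAmplitude m l‖ + l * (3 * ε * (m + 24))) := by
  obtain ⟨hleft, hright⟩ := ne_zero_at_turning_points h hu hne
  have hε := h.eps_pos
  have hm := h.freq_pos
  have hz := norm_inv_smul_sub_le (norm_conj_amplitude_sub_le h
    (hu.mono (Icc_subset_Icc_right (by linarith [h.eps_le])))) hleft
  have hw := norm_inv_smul_sub_le (norm_amplitude_one_sub_sub_le h hu) hright
  have him := im_exp_mul_inv_smul_amplitudes_eq_zero h hu (u (x0 ε)) (u (1 - x0 ε))
  have hphase : ‖Complex.exp (m * Complex.I) -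
      Complex.exp (↑(m * (1 - ε - ε)) * Complex.I)‖ ≤ 2 * (ε * m) := by
    refine (norm_exp_ofReal_mul_I_sub_le _ _).trans_eq ?_
    rw [show m - m * (1 - ε - ε) = 2 * (ε * m) by ring, abs_of_pos (by positivity)]
  calc l * |robinCharacteristic m l|
      = |(Complex.exp (m * Complex.I) * robinAmplitude m l ^ 2).im| := by
        rw [im_exp_mul_robinAmplitude_sq h.freq_sq, abs_mul, abs_neg,
          abs_of_pos h.eigenvalue_pos]
    _ ≤ _ := by
        rw [← sub_zero (Complex.im _), ← him, ← Complex.sub_im]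
        refine (Complex.abs_im_le_norm _).trans <|
          (norm_mul_sq_sub_mul_mul_le (Complex.norm_exp_ofReal_mul_I _).le hz hw).trans ?_
        gcongr

theorem abs_robinCharacteristic_le (h : IsAdmissible ε l m)
    (hu : IsSolutionOn (phi2 ε) (phi1 ε) l (Icc 0 1) u u' u'')
    (hne : ∃ x ∈ Icc (0 : ℝ) 1, u x ≠ 0) :
    |robinCharacteristic m l| ≤ 300 * (ε * m * (1 + l)) := by
  have hε := h.eps_pos
  have hm := h.freq_pos
  have hl := h.eigenvalue_pos
  have hsmall : 3 * ε * (m + 24) ≤ 1 := by linarith [h.error_lt, robinConst_mem_Ioo.2]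
  have hmul : l * |robinCharacteristic m l| ≤
      l * (2 * (ε * m) * (6 + l) + 3 * ε * (m + 24) * (2 * m + 3 * l)) :=
    calc _ ≤ 2 * (ε * m) * (l * (6 + l)) +
          l * (3 * ε * (m + 24)) * (2 * (m + l) + l * 1) := by
          refine (mul_abs_robinCharacteristic_le h hu hne).trans ?_
          gcongr
          · exact norm_robinAmplitude_sq_le h.freq_sq
          · exact norm_robinAmplitude_le hm.le hl.le
      _ = _ := by ring
  have hm3 : m ≤ 3 * (1 + l) := by nlinarith [sq_nonneg (m - 1), h.freq_sq]
  calc _ ≤ 2 * (ε * m) * (6 + l) + 3 * ε * (m + 24) * (2 * m + 3 * l) :=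
        le_of_mul_le_mul_left hmul hl
    _ = ε * m * (156 + 11 * l + 42 * m) := by
        linear_combination -36 * ε * h.freq_sq
    _ ≤ ε * m * (300 * (1 + l)) := by
        gcongr
        linarith
    _ = _ := by ring

theorem robinCharacteristic_le_neg (hm : 0 < m) (hm' : m ≤ 1 / 2) (hml : m ^ 2 = 6 * l) :
    robinCharacteristic m l ≤ -m := by
  obtain ⟨hlo, hhi⟩ := robinConst_mem_Ioo
  have hsin : m / 2 ≤ sin m := by
    nlinarith [sin_gt_sub_cube hm, mul_pos hm hm]
  have hcos : 0 ≤ 2 * robinConst * m * cos m :=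
    mul_nonneg (by nlinarith) (cos_pos_of_le_one (by rw [abs_of_pos hm]; linarith)).le
  have hκl : robinConst ^ 2 * l ≤ 1 :=
    mul_le_one₀ (pow_le_one₀ (by linarith) (by linarith)) (by nlinarith) (by nlinarith)
  have hprod : sin m * (robinConst ^ 2 * l - 6) ≤ sin m * -5 :=
    mul_le_mul_of_nonneg_left (by linarith) (by linarith)
  unfold robinCharacteristic
  linarith

theorem IsAdmissible.one_half_lt_freq (h : IsAdmissible ε l m)
    (hu : IsSolutionOn (phi2 ε) (phi1 ε) l (Icc 0 1) u u' u'')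
    (hne : ∃ x ∈ Icc (0 : ℝ) 1, u x ≠ 0) : 1 / 2 < m := by
  by_contra! hm'
  have hm := h.freq_pos
  have hl : l ≤ 1 := by nlinarith [h.freq_sq]
  have hlower : m ≤ |robinCharacteristic m l| :=
    (le_neg.1 (robinCharacteristic_le_neg hm hm' h.freq_sq)).trans (neg_le_abs _)
  have hupper : 300 * (ε * m * (1 + l)) ≤ 300 * (1 / 1000 * m * (1 + 1)) := by
    have := h.eigenvalue_pos
    gcongr
    exact h.eps_le
  linarith [abs_robinCharacteristic_le h hu hne]

theorem abs_robinCharacteristic_sqrt_le (hε : 0 < ε) (hε' : ε ≤ 1 / 1000) (hl : 0 ≤ l)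
    (hlε : l * ε ^ 2 ≤ 1 / 6000) (hu : IsSolutionOn (phi2 ε) (phi1 ε) l (Icc 0 1) u u' u'')
    (hne : ∃ x ∈ Icc (0 : ℝ) 1, u x ≠ 0) :
    |robinCharacteristic √(6 * l) l| ≤ 20000 * ε * l ^ (3 / 2 : ℝ) := by
  rcases hl.eq_or_lt with rfl | hlpos
  · simp [robinCharacteristic]
  have hadm : IsAdmissible ε l √(6 * l) :=
    ⟨hε, hε', hlpos, hlε, by positivity, sq_sqrt (by positivity)⟩
  have hl24 : 1 / 24 ≤ l := by nlinarith [hadm.one_half_lt_freq hu hne, hadm.freq_sq]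
  have hsqrt : √(6 * l) ≤ 5 / 2 * √l := by
    rw [sqrt_mul (by norm_num)]
    gcongr
    exact (sqrt_le_left (by norm_num)).2 (by norm_num)
  have hpow : l ^ (3 / 2 : ℝ) = √l * l := by
    rw [sqrt_eq_rpow, ← rpow_add_one hlpos.ne']
    norm_num
  calc _ ≤ 300 * (ε * √(6 * l) * (1 + l)) := abs_robinCharacteristic_le hadm hu hne
    _ ≤ 300 * (ε * (5 / 2 * √l) * (25 * l)) := by
        gcongr
        linarith
    _ = 18750 * (ε * (√l * l)) := by ring
    _ ≤ 20000 * (ε * (√l * l)) := by gcongr; norm_num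
    _ = _ := by rw [hpow, mul_assoc]

end Characteristic

theorem stmt11_general {ε₁ : ℝ} (hε₁ : 0 < ε₁) {lam : ℝ → ℝ} {u u' u'' : ℝ → ℝ → ℝ}
    (hlam : ∀ ε ∈ Ioc 0 ε₁, 0 ≤ lam ε)
    (hu : ∀ ε ∈ Ioc 0 ε₁,
      IsSolutionOn (phi2 ε) (phi1 ε) (lam ε) (Icc 0 1) (u ε) (u' ε) (u'' ε))
    (hne : ∀ ε ∈ Ioc 0 ε₁, ∃ x ∈ Icc (0 : ℝ) 1, u ε x ≠ 0)
    (hsmall : ∀ᶠ ε in 𝓝[>] (0 : ℝ), lam ε * ε ^ 2 ≤ 1 / 6000) :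
    ∃ ε₀ : ℝ, 0 < ε₀ ∧ ε₀ ≤ ε₁ ∧ ∀ ε : ℝ, 0 < ε → ε ≤ ε₀ →
      |sin √(6 * lam ε) * ((21 - 12 * √3) * lam ε - 6) +
        2 * √(6 * lam ε) * (3 - 2 * √3) * cos √(6 * lam ε)|
        ≤ 20000 * ε * lam ε ^ ((3 : ℝ) / 2) := by
  obtain ⟨ε₂, hε₂, hsmall⟩ := mem_nhdsGT_iff_exists_Ioc_subset.1 hsmall
  refine ⟨min ε₁ (min ε₂ (1 / 1000)), lt_min hε₁ (lt_min hε₂ (by norm_num)), min_le_left _ _,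
    fun ε hε hle => ?_⟩
  obtain ⟨hle₁, hle₂, hle₃⟩ := by simpa only [le_min_iff] using hle
  have hmem : ε ∈ Ioc 0 ε₁ := ⟨hε, hle₁⟩
  convert abs_robinCharacteristic_sqrt_le hε hle₃ (hlam ε hmem) (hsmall ⟨hε, hle₂⟩) (hu ε hmem)
    (hne ε hmem) using 2
  rw [robinCharacteristic, robinConst_sq, robinConst]
  ring

theorem stmt11 (ε₁ : ℝ) (hε₁ : 0 < ε₁) (lam : ℝ → ℝ) (u u' u'' : ℝ → ℝ → ℝ)
    (hfam : ∀ ε ∈ Ioc (0:ℝ) ε₁,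
      0 ≤ lam ε ∧
      (∀ x ∈ Icc (0:ℝ) 1, HasDerivAt (u ε) (u' ε x) x) ∧
      (∀ x ∈ Icc (0:ℝ) 1, HasDerivAt (u' ε) (u'' ε x) x) ∧
      ContinuousOn (u'' ε) (Icc 0 1) ∧
      (∀ x ∈ Icc (0:ℝ) 1, phi2 ε x * u'' ε x + phi1 ε x * u' ε x = lam ε * u ε x) ∧
      (∃ x ∈ Icc (0:ℝ) 1, u ε x ≠ 0))
    (hlim : Tendsto (fun ε => lam ε * ε^2) (𝓝[>] (0:ℝ)) (𝓝 0)) :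
    ∃ C > (0:ℝ), ∃ ε₀ : ℝ, 0 < ε₀ ∧ ε₀ ≤ ε₁ ∧ ∀ ε : ℝ, 0 < ε → ε ≤ ε₀ →
      |Real.sin (Real.sqrt (6*lam ε)) * ((21 - 12*Real.sqrt 3) * lam ε - 6) +
        2*Real.sqrt (6*lam ε) * (3 - 2*Real.sqrt 3) * Real.cos (Real.sqrt (6*lam ε))|
        ≤ C * ε * (lam ε) ^ ((3:ℝ)/2) :=
  ⟨20000, by norm_num, stmt11_general hε₁ (fun ε hε => (hfam ε hε).1)
    (fun ε hε => let ⟨_, hu, hu', _, heq, _⟩ := hfam ε hε; ⟨hu, hu', heq⟩)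
    (fun ε hε => (hfam ε hε).2.2.2.2.2) (hlim.eventually_le_const (by norm_num))⟩
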